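/- arXiv:0711.2236 — 2 statements merged into one kernel-verified Lean document; each statement's English description precedes it below -/
import Mathlib

section
/- Let M be an n×n Manin matrix over an associative unital (possibly noncommutative) ring R. Then the column determinant of M does not depend on the order of the columns used in its expansion: for every permutation p ∈ S_n one has det^col(M) = Σ_{σ∈S_n} sgn(σ) · M_{σ(p(1)),p(1)} M_{σ(p(2)),p(2)} ⋯ M_{σ(p(n)),p(n)}, where the factors are multiplied in the indicated order. -/
open scoped BigOperators

/-- A matrix `M` over a (possibly noncommutative) ring is a *Manin matrix* if
entries of the same column commute and cross-commutators of 2×2 submatrices are equal. -/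
def Matrix.IsManin {R : Type*} [Ring R] {n m : ℕ} (M : Matrix (Fin n) (Fin m) R) : Prop :=
  (∀ i k : Fin n, ∀ j : Fin m, M i j * M k j = M k j * M i j) ∧
  (∀ i k : Fin n, ∀ j l : Fin m,
    M i j * M k l - M k l * M i j = M k j * M i l - M i l * M k j)

/-- Column determinant: factors multiplied in order of increasing column index. -/
noncomputable def Matrix.detCol {R : Type*} [Ring R] {n : ℕ}
    (M : Matrix (Fin n) (Fin n) R) : R :=
  ∑ σ : Equiv.Perm (Fin n),
    (Equiv.Perm.sign σ : ℤ) • ((List.finRange n).map (fun i => M (σ i) i)).prod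

/-- Row determinant: factors multiplied in order of increasing row index. -/
noncomputable def Matrix.detRow {R : Type*} [Ring R] {n : ℕ}
    (M : Matrix (Fin n) (Fin n) R) : R :=
  ∑ σ : Equiv.Perm (Fin n),
    (Equiv.Perm.sign σ : ℤ) • ((List.finRange n).map (fun i => M i (σ i))).prod

/-- Row permanent: factors multiplied in order of increasing row index. -/
noncomputable def Matrix.permRow {R : Type*} [Ring R] {n : ℕ}
    (M : Matrix (Fin n) (Fin n) R) : R :=
  ∑ σ : Equiv.Perm (Fin n), ((List.finRange n).map (fun i => M i (σ i))).prod

/-!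
Exchanging two adjacent columns `x`, `y` changes the summand of a permutation `σ` by
`sign σ` times `a * ⁅M (σ x) x, M (σ y) y⁆ * b`, where `a` and `b` come from the other columns.
Equality of cross-commutators says that this product is the same for `σ` and `σ * swap x y`, whose
signs are opposite, so the changes cancel in pairs.
-/

section

variable {ι R : Type*} [DecidableEq ι]

theorem map_mul_swap_of_notMem {α : Type*} (f : ι → ι → α) (σ : Equiv.Perm ι) {x y : ι}
    {L : List ι} (hx : x ∉ L) (hy : y ∉ L) :
    L.map (fun j => f ((σ * Equiv.swap x y) j) j) = L.map (fun j => f (σ j) j) := by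
  refine List.map_congr_left fun j hj => ?_
  rw [Equiv.Perm.mul_apply,
    Equiv.swap_apply_of_ne_of_ne (ne_of_mem_of_not_mem hj hx) (ne_of_mem_of_not_mem hj hy)]

theorem sum_sign_smul_eq_zero_of_mul_swap [Fintype ι] {G : Type*} [AddCommGroup G]
    {F : Equiv.Perm ι → G} {x y : ι} (hxy : x ≠ y)
    (hF : ∀ σ, F (σ * Equiv.swap x y) = F σ) :
    ∑ σ : Equiv.Perm ι, (Equiv.Perm.sign σ : ℤ) • F σ = 0 := by
  refine Finset.sum_involution (fun σ _ => σ * Equiv.swap x y) ?cancel ?ne (by simp) ?involutive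
  case cancel =>
    intro σ _
    simp [hF, Equiv.Perm.sign_swap hxy]
  case ne =>
    intro σ _ _ hσ
    exact hxy (Equiv.swap_eq_one_iff.1 (mul_eq_left.1 hσ))
  case involutive =>
    intro σ _
    exact Equiv.mul_swap_mul_self x y σ

variable [Ring R]

/-- Equality of the cross-commutators of all `2 × 2` submatrices on two distinct columns: the
part of the Manin condition that involves two columns, over arbitrary index types. The case `j = l`,
where the equation would say `2 • ⁅M i j, M k j⁆ = 0`, is left out. -/
def HasEqualCrossCommutators {m n : Type*} (M : Matrix m n R) : Prop :=
  ∀ i k j l, j ≠ l → ⁅M i j, M k l⁆ = ⁅M k j, M i l⁆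

variable [Fintype ι]

/-- The column determinant expanded along a list `L` of columns: the factors are multiplied in the
order in which their columns occur in `L`, which need not contain every column. -/
def detColAlong (M : Matrix ι ι R) (L : List ι) : R :=
  ∑ σ : Equiv.Perm ι, (Equiv.Perm.sign σ : ℤ) • (L.map fun j => M (σ j) j).prod

theorem detColAlong_sub_adjacent_swap (M : Matrix ι ι R) (A B : List ι) (x y : ι) :
    detColAlong M (A ++ x :: y :: B) - detColAlong M (A ++ y :: x :: B) =
      ∑ σ : Equiv.Perm ι, (Equiv.Perm.sign σ : ℤ) •
        ((A.map fun j => M (σ j) j).prod * ⁅M (σ x) x, M (σ y) y⁆ *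
          (B.map fun j => M (σ j) j).prod) := by
  simp only [detColAlong, ← Finset.sum_sub_distrib, ← smul_sub, List.map_append, List.map_cons,
    List.prod_append, List.prod_cons, Ring.lie_def, mul_sub, sub_mul, mul_assoc]

variable {M : Matrix ι ι R}

theorem detColAlong_adjacent_swap (hM : HasEqualCrossCommutators M) {A B : List ι} {x y : ι}
    (hL : (A ++ x :: y :: B).Nodup) :
    detColAlong M (A ++ x :: y :: B) = detColAlong M (A ++ y :: x :: B) := by
  obtain ⟨hxy, hxA, hyA, hxB, hyB⟩ : x ≠ y ∧ x ∉ A ∧ y ∉ A ∧ x ∉ B ∧ y ∉ B := by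
    grind
  rw [← sub_eq_zero, detColAlong_sub_adjacent_swap]
  refine sum_sign_smul_eq_zero_of_mul_swap hxy fun σ => ?_
  have hcomm : ⁅M ((σ * Equiv.swap x y) x) x, M ((σ * Equiv.swap x y) y) y⁆ =
      ⁅M (σ x) x, M (σ y) y⁆ := by
    simpa only [Equiv.Perm.mul_apply, Equiv.swap_apply_left, Equiv.swap_apply_right] using
      hM (σ y) (σ x) x y hxy
  rw [hcomm, map_mul_swap_of_notMem M σ hxA hyA, map_mul_swap_of_notMem M σ hxB hyB]

theorem detColAlong_append_perm (hM : HasEqualCrossCommutators M) {L L' : List ι}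
    (hLL' : L.Perm L') (A : List ι) (hL : (A ++ L).Nodup) :
    detColAlong M (A ++ L) = detColAlong M (A ++ L') := by
  induction hLL' generalizing A with
  | nil => rfl
  | cons x _ ih => simpa using ih (A ++ [x]) (by simpa using hL)
  | swap x y B => exact detColAlong_adjacent_swap hM hL
  | trans h₁ _ ih₁ ih₂ => exact (ih₁ A hL).trans (ih₂ A ((h₁.append_left A).nodup hL))

theorem detCol_column_order_independent_general (hM : HasEqualCrossCommutators M)
    {L L' : List ι} (hLL' : L.Perm L') (hL : L.Nodup) :
    detColAlong M L = detColAlong M L' :=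
  detColAlong_append_perm hM hLL' [] hL

end

/-- the column determinant of a Manin matrix does not depend on the
order of the columns used in its expansion. -/
theorem detCol_column_order_independent {R : Type*} [Ring R] {n : ℕ}
    (M : Matrix (Fin n) (Fin n) R) (hM : M.IsManin) (p : Equiv.Perm (Fin n)) :
    M.detCol = ∑ σ : Equiv.Perm (Fin n),
      (Equiv.Perm.sign σ : ℤ) •
        ((List.finRange n).map (fun i => M (σ (p i)) (p i))).prod := by
  have hcross : HasEqualCrossCommutators M := fun i k j l _ => hM.2 i k j l
  simpa only [detColAlong, Matrix.detCol, List.map_map, Function.comp_def] using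
    detCol_column_order_independent_general hcross p.map_finRange_perm.symm (List.nodup_finRange n)
end

section
/- Newton identities for Manin matrices: let M be an n×n Manin matrix over an associative unital (possibly noncommutative) ring R, and let h_0, …, h_n ∈ R be defined by det^col(t·1_n − M) = Σ_{k=0}^n h_k·t^k in the polynomial ring R[t] with central variable t, with the convention h_k = 0 for k < 0 and k > n. Then for every integer k ≤ n: k·h_k = Σ_{i = max(0,−k)}^{n−k} h_{k+i} · Tr(M^i), where Tr denotes the matrix trace and M^0 = 1_n (in each summand the coefficient h_{k+i} appears on the left of the trace Tr(M^i)). -/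
open scoped BigOperators

/-!
For a Manin matrix the factors in the column determinant may be multiplied in any fixed order of the
columns: by the cross-commutator relation, the difference of two orders cancels under
`σ ↦ σ * (p q)`. Likewise a Manin matrix with two equal columns has determinant zero, so moving a
column to the last place yields Cramer's rule `adj N * N = det N • 1`. For `N = t - M` write
`adj N = ∑ m, B (m + 1) * t ^ m`. Comparing coefficients gives `B m - B (m + 1) * M = h m • 1`, so
`∑ i, h (m + i) • M ^ i` telescopes to `B m`, whose trace is `m • h m` because `tr (adj (t - M))` is
the derivative of `det (t - M)`. The case `m = 0` is the Cayley–Hamilton theorem; multiplied by a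
power of `M`, it gives the identities of negative index.
-/

namespace ManinMatrix

open Matrix Polynomial

theorem sum_sign_smul_eq_zero_of_mul_swap {ι A : Type*} [Fintype ι] [DecidableEq ι]
    [AddCommGroup A] {p q : ι} (hpq : p ≠ q) {f : Equiv.Perm ι → A}
    (hf : ∀ σ, f (σ * Equiv.swap p q) = f σ) :
    ∑ σ : Equiv.Perm ι, (Equiv.Perm.sign σ : ℤ) • f σ = 0 := by
  refine Finset.sum_involution (fun σ _ => σ * Equiv.swap p q) ?_ ?_ ?_ ?_
  · intro σ _
    simp [hf, Equiv.Perm.sign_swap hpq]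
  · intro σ _ _ h
    exact hpq (Equiv.swap_eq_one_iff.mp (mul_eq_left.mp h))
  · simp
  · intro σ _
    simp [mul_assoc]

theorem map_apply_swap_of_notMem {ι α : Type*} [DecidableEq ι] (N : Matrix ι ι α)
    (σ : Equiv.Perm ι) {p q : ι} {L : List ι} (hp : p ∉ L) (hq : q ∉ L) :
    L.map (fun j => N (σ (Equiv.swap p q j)) j) = L.map (fun j => N (σ j) j) := by
  refine List.map_congr_left fun j hj => ?_
  rw [Equiv.swap_apply_of_ne_of_ne (ne_of_mem_of_not_mem hj hp) (ne_of_mem_of_not_mem hj hq)]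

theorem sum_int_Icc_eq_sum_range {A : Type*} [AddCommMonoid A] (f : ℤ → A) (a b : ℤ) :
    ∑ i ∈ Finset.Icc a b, f i = ∑ j ∈ Finset.range (b + 1 - a).toNat, f (a + j) := by
  simp [Int.Icc_eq_finset_map]

section IsManin

variable {R S : Type*} [Ring R] [Ring S] {n m : ℕ} {N : Matrix (Fin n) (Fin m) R}

theorem isManin_submatrix (hN : N.IsManin) {n' m' : ℕ} (f : Fin n' → Fin n)
    (g : Fin m' → Fin m) : (N.submatrix f g).IsManin :=
  ⟨fun i k j => hN.1 (f i) (f k) (g j), fun i k j l => hN.2 (f i) (f k) (g j) (g l)⟩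

theorem isManin_map (hN : N.IsManin) (f : R →+* S) : (N.map f).IsManin := by
  refine ⟨fun i k j => ?_, fun i k j l => ?_⟩
  · simp only [map_apply, ← map_mul, hN.1 i k j]
  · simp only [map_apply, ← map_mul, ← map_sub, hN.2 i k j l]

theorem isManin_updateCol_of_commute (hN : N.IsManin) (j₀ : Fin m) {b : Fin n → R}
    (hb : ∀ i x, Commute (b i) x) : (N.updateCol j₀ b).IsManin := by
  refine ⟨fun i k j => ?_, fun i k j l => ?_⟩
  · by_cases hj : j = j₀
    · simp [hj, (hb i _).eq]
    · simp [hj, hN.1 i k j]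
  · by_cases hj : j = j₀ <;> by_cases hl : l = j₀
    · simp [hj, hl, (hb i (b k)).eq]
    · simp [hj, hl, (hb i _).eq, (hb k _).eq]
    · simp [hj, hl, (hb i _).eq, (hb k _).eq]
    · simp [hj, hl, hN.2 i k j l]

theorem isManin_sub_of_commute (hN : N.IsManin) {Z : Matrix (Fin n) (Fin m) R}
    (hZ : ∀ i j x, Commute (Z i j) x) : (Z - N).IsManin := by
  have commutator_eq (i k : Fin n) (j l : Fin m) :
      (Z - N) i j * (Z - N) k l - (Z - N) k l * (Z - N) i j =
        N i j * N k l - N k l * N i j := by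
    simp only [Matrix.sub_apply, sub_mul, mul_sub, (hZ i j _).eq, (hZ k l (N _ _)).eq]
    abel
  refine ⟨fun i k j => ?_, fun i k j l => ?_⟩
  · rw [← sub_eq_zero, commutator_eq, hN.1 i k j, sub_self]
  · rw [commutator_eq, commutator_eq, hN.2]

end IsManin

section OrderedDet

variable {R ι : Type*} [Ring R] [Fintype ι] [DecidableEq ι]

/-- The column determinant of the columns listed in `L`, with factors multiplied in the order of
`L`. The rows still range over all permutations of `ι`, so that this is a determinant only when
`L` enumerates `ι`. -/
def orderedDet (L : List ι) (N : Matrix ι ι R) : R :=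
  ∑ σ : Equiv.Perm ι, (Equiv.Perm.sign σ : ℤ) • (L.map fun j => N (σ j) j).prod

theorem orderedDet_append_singleton_updateCol {L : List ι} {j₀ : ι} (hj₀ : j₀ ∉ L)
    (N : Matrix ι ι R) (b : ι → R) :
    orderedDet (L ++ [j₀]) (N.updateCol j₀ b) =
      ∑ σ : Equiv.Perm ι,
        (Equiv.Perm.sign σ : ℤ) • ((L.map fun j => N (σ j) j).prod * b (σ j₀)) := by
  refine Finset.sum_congr rfl fun σ _ => ?_
  have hL : (L.map fun j => N.updateCol j₀ b (σ j) j) = L.map fun j => N (σ j) j :=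
    List.map_congr_left fun j hj => updateCol_ne (ne_of_mem_of_not_mem hj hj₀)
  simp [hL]

theorem orderedDet_append_singleton_updateCol_eq_sum {L : List ι} {j₀ : ι} (hj₀ : j₀ ∉ L)
    (N : Matrix ι ι R) (b : ι → R) :
    orderedDet (L ++ [j₀]) (N.updateCol j₀ b) =
      ∑ i, orderedDet (L ++ [j₀]) (N.updateCol j₀ (Pi.single i 1)) * b i := by
  simp only [orderedDet_append_singleton_updateCol hj₀, Finset.sum_mul]
  rw [Finset.sum_comm]
  refine Finset.sum_congr rfl fun σ _ => ?_
  simp [Pi.single_apply, mul_assoc]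

end OrderedDet

section Determinant

variable {R : Type*} [Ring R] {n : ℕ} {N : Matrix (Fin n) (Fin n) R}

theorem orderedDet_swap (hN : N.IsManin) {p q : Fin n} {A B : List (Fin n)}
    (h : (A ++ p :: q :: B).Nodup) :
    orderedDet (A ++ p :: q :: B) N = orderedDet (A ++ q :: p :: B) N := by
  have hpq : p ≠ q := by grind
  have hpA : p ∉ A := by grind
  have hqA : q ∉ A := by grind
  have hpB : p ∉ B := by grind
  have hqB : q ∉ B := by grind
  let f (σ : Equiv.Perm (Fin n)) : R :=
    (A.map fun j => N (σ j) j).prod *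
      (N (σ p) p * N (σ q) q - N (σ q) q * N (σ p) p) * (B.map fun j => N (σ j) j).prod
  have hf (σ : Equiv.Perm (Fin n)) : f (σ * Equiv.swap p q) = f σ := by
    simp only [f, map_apply_swap_of_notMem N σ hpA hqA, map_apply_swap_of_notMem N σ hpB hqB,
      Equiv.Perm.mul_apply, Equiv.swap_apply_left, Equiv.swap_apply_right,
      hN.2 (σ q) (σ p) p q]
  rw [← sub_eq_zero, orderedDet, orderedDet, ← Finset.sum_sub_distrib,
    ← sum_sign_smul_eq_zero_of_mul_swap hpq hf]
  refine Finset.sum_congr rfl fun σ _ => ?_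
  simp only [f, ← smul_sub, List.map_append, List.map_cons, List.prod_append, List.prod_cons,
    mul_sub, sub_mul, mul_assoc]

theorem orderedDet_perm (hN : N.IsManin) {L L' : List (Fin n)} (h : L.Perm L') (hL : L.Nodup) :
    orderedDet L N = orderedDet L' N := by
  suffices ∀ A : List (Fin n), (A ++ L).Nodup →
      orderedDet (A ++ L) N = orderedDet (A ++ L') N from this [] hL
  clear hL
  induction h with
  | nil => exact fun _ _ => rfl
  | cons x _ ih =>
    intro A hA
    simpa using ih (A ++ [x]) (by simpa using hA)
  | swap x y l => exact fun A hA => orderedDet_swap hN hA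
  | trans h₁ _ ih₁ ih₂ =>
    exact fun A hA => (ih₁ A hA).trans (ih₂ A ((h₁.append_left A).nodup_iff.mp hA))

theorem detCol_eq_orderedDet (hN : N.IsManin) {L : List (Fin n)} (hL : (List.finRange n).Perm L) :
    N.detCol = orderedDet L N :=
  orderedDet_perm hN hL (List.nodup_finRange n)

theorem detCol_eq_zero_of_column_eq (hN : N.IsManin) {p q : Fin n} (hpq : p ≠ q)
    (hcol : ∀ i, N i p = N i q) : N.detCol = 0 := by
  let B := ((List.finRange n).erase p).erase q
  have hq : q ∈ (List.finRange n).erase p :=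
    (List.mem_erase_of_ne hpq.symm).mpr (List.mem_finRange q)
  have hperm : (List.finRange n).Perm (p :: q :: B) :=
    (List.perm_cons_erase (List.mem_finRange p)).trans ((List.perm_cons_erase hq).cons p)
  have hnodup : (p :: q :: B).Nodup := hperm.nodup_iff.mp (List.nodup_finRange n)
  have hpB : p ∉ B := by grind
  have hqB : q ∉ B := by grind
  rw [detCol_eq_orderedDet hN hperm]
  refine sum_sign_smul_eq_zero_of_mul_swap hpq fun σ => ?_
  simp only [List.map_cons, List.prod_cons, map_apply_swap_of_notMem N σ hpB hqB,
    Equiv.Perm.mul_apply, Equiv.swap_apply_left, Equiv.swap_apply_right, hcol, ← mul_assoc,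
    hN.1 (σ q) (σ p) q]

/-- The left adjugate for the column determinant: as for `Matrix.adjugate`, the `(i, j)` entry is
the determinant of `N` with its `i`-th column replaced by the `j`-th standard basis vector. -/
noncomputable def adjCol (N : Matrix (Fin n) (Fin n) R) : Matrix (Fin n) (Fin n) R :=
  of fun i j => (N.updateCol i (Pi.single j 1)).detCol

theorem isManin_updateCol_single (hN : N.IsManin) (i j : Fin n) :
    (N.updateCol i (Pi.single j 1)).IsManin := by
  refine isManin_updateCol_of_commute hN i fun k x => ?_
  by_cases hk : k = j <;> simp [hk]

theorem detCol_updateCol_eq_sum_adjCol (hN : N.IsManin) {i : Fin n} {b : Fin n → R}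
    (hb : (N.updateCol i b).IsManin) : (N.updateCol i b).detCol = ∑ j, adjCol N i j * b j := by
  have hperm : (List.finRange n).Perm ((List.finRange n).erase i ++ [i]) :=
    (List.perm_cons_erase (List.mem_finRange i)).trans (List.perm_append_singleton _ _).symm
  have hi : i ∉ (List.finRange n).erase i := (List.nodup_finRange n).not_mem_erase
  simp only [adjCol, of_apply, detCol_eq_orderedDet hb hperm,
    detCol_eq_orderedDet (isManin_updateCol_single hN _ _) hperm]
  exact orderedDet_append_singleton_updateCol_eq_sum hi N b

theorem adjCol_mul (hN : N.IsManin) :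
    adjCol N * N = N.detCol • (1 : Matrix (Fin n) (Fin n) R) := by
  ext i l
  have hcol : N.updateCol i (N.col l) = N.submatrix id (Function.update id i l) := by
    ext k j
    by_cases hj : j = i <;> simp [hj]
  have hmanin : (N.updateCol i (N.col l)).IsManin :=
    hcol ▸ isManin_submatrix hN id (Function.update id i l)
  have hcramer : (adjCol N * N) i l = (N.updateCol i (N.col l)).detCol :=
    (detCol_updateCol_eq_sum_adjCol hN hmanin).symm
  rw [hcramer]
  by_cases hil : i = l
  · subst hil
    have hself : N.updateCol i (N.col i) = N := updateCol_eq_self N i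
    simp [hself]
  · rw [detCol_eq_zero_of_column_eq hmanin hil fun k => by simp [Ne.symm hil]]
    simp [hil]

end Determinant

section PolynomialEntries

theorem derivative_list_prod_map {R ι : Type*} [Semiring R] [DecidableEq ι] (f : ι → R[X])
    {L : List ι} (hL : L.Nodup) :
    derivative (L.map f).prod =
      ∑ i ∈ L.toFinset, (L.map (Function.update f i (derivative (f i)))).prod := by
  induction L with
  | nil => simp
  | cons a L ih =>
    obtain ⟨ha, hL⟩ := List.nodup_cons.mp hL
    have hhead : L.map (Function.update f a (derivative (f a))) = L.map f :=
      List.map_congr_left fun i hi => Function.update_of_ne (ne_of_mem_of_not_mem hi ha) _ _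
    rw [List.map_cons, List.prod_cons, derivative_mul, ih hL, List.toFinset_cons,
      Finset.sum_insert (by simpa using ha), Finset.mul_sum]
    congr 1
    · simp [hhead]
    · refine Finset.sum_congr rfl fun i hi => ?_
      have hai : a ≠ i := (ne_of_mem_of_not_mem (List.mem_toFinset.mp hi) ha).symm
      simp [Function.update_of_ne hai]

variable {R : Type*} [Ring R] {n : ℕ}

theorem derivative_detCol (N : Matrix (Fin n) (Fin n) R[X]) :
    derivative N.detCol = ∑ j, (N.updateCol j fun i => derivative (N i j)).detCol := by
  simp only [detCol, derivative_sum]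
  rw [Finset.sum_comm]
  refine Finset.sum_congr rfl fun σ _ => ?_
  rw [derivative_smul, derivative_list_prod_map _ (List.nodup_finRange n),
    List.toFinset_finRange, Finset.smul_sum]
  refine Finset.sum_congr rfl fun j _ => ?_
  congr 3
  ext1 k
  by_cases hk : k = j
  · subst hk
    simp
  · simp [hk]

theorem natDegree_detCol_le {N : Matrix (Fin n) (Fin n) R[X]} {d : Fin n → ℕ}
    (hd : ∀ i j, (N i j).natDegree ≤ d j) : N.detCol.natDegree ≤ ∑ j, d j := by
  refine natDegree_sum_le_of_forall_le _ _ fun σ _ => ?_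
  calc _ ≤ (((List.finRange n).map fun j => N (σ j) j).map natDegree).sum :=
        (natDegree_smul_le _ _).trans (natDegree_list_prod_le _)
    _ ≤ ((List.finRange n).map d).sum := by
        rw [List.map_map]
        exact List.sum_le_sum fun j _ => hd (σ j) j
    _ = ∑ j, d j := by
        rw [← List.sum_toFinset d (List.nodup_finRange n), List.toFinset_finRange]

end PolynomialEntries

section CharPoly

variable {R : Type*} [Ring R] {n : ℕ}

/-- The matrix `X • 1 - M`; `Matrix.charmatrix` is only available over commutative rings. -/
noncomputable def charMatrixCol (M : Matrix (Fin n) (Fin n) R) : Matrix (Fin n) (Fin n) R[X] :=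
  diagonal (fun _ => X) - M.map fun a => C a

/-- The characteristic polynomial formed with the column determinant. -/
noncomputable def charpolyCol (M : Matrix (Fin n) (Fin n) R) : R[X] :=
  (charMatrixCol M).detCol

theorem isManin_charMatrixCol {M : Matrix (Fin n) (Fin n) R} (hM : M.IsManin) :
    (charMatrixCol M).IsManin := by
  refine isManin_sub_of_commute (isManin_map hM C) fun i j p => ?_
  by_cases hij : i = j
  · simpa [hij] using commute_X p
  · simp [hij]

theorem coeff_mul_charMatrixCol_apply (A : Matrix (Fin n) (Fin n) R[X])
    (M : Matrix (Fin n) (Fin n) R) (i j : Fin n) (m : ℕ) :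
    ((A * charMatrixCol M) i j).coeff m =
      (A i j * X).coeff m - ∑ l, (A i l).coeff m * M l j := by
  rw [charMatrixCol, mul_sub, Matrix.sub_apply, mul_diagonal, coeff_sub]
  simp [mul_apply]

theorem derivative_charMatrixCol_apply (M : Matrix (Fin n) (Fin n) R) (i j : Fin n) :
    derivative (charMatrixCol M i j) = Pi.single (M := fun _ => R[X]) j 1 i := by
  by_cases hij : i = j <;> simp [charMatrixCol, hij]

theorem derivative_charpolyCol (M : Matrix (Fin n) (Fin n) R) :
    derivative (charpolyCol M) = (adjCol (charMatrixCol M)).trace := by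
  simp only [charpolyCol, derivative_detCol, derivative_charMatrixCol_apply]
  rfl

theorem natDegree_adjCol_charMatrixCol_lt (M : Matrix (Fin n) (Fin n) R) (i j : Fin n) :
    (adjCol (charMatrixCol M) i j).natDegree < n := by
  have hdeg (k l : Fin n) :
      ((charMatrixCol M).updateCol i (Pi.single j 1) k l).natDegree ≤ if l = i then 0 else 1 := by
    by_cases hl : l = i
    · by_cases hk : k = j <;> simp [hl, hk]
    · by_cases hk : k = l
      · simpa [hl, hk, charMatrixCol] using natDegree_X_sub_C_le (M l l)
      · simp [hl, hk, charMatrixCol]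
  calc _ ≤ ∑ l : Fin n, (if l = i then 0 else 1) := natDegree_detCol_le hdeg
    _ < ∑ _l : Fin n, 1 :=
        Finset.sum_lt_sum (fun l _ => by split_ifs <;> simp) ⟨i, Finset.mem_univ i, by simp⟩
    _ = n := by simp

/-- The coefficient of `X ^ m` in `X • adjCol (X • 1 - M)`. The extra factor `X` shifts the index
so that the recursion `adjCoeff_sub_adjCoeff_succ_mul` starts with `adjCoeff M 0 = 0`. -/
noncomputable def adjCoeff (M : Matrix (Fin n) (Fin n) R) (m : ℕ) : Matrix (Fin n) (Fin n) R :=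
  (adjCol (charMatrixCol M)).map fun p => (p * X).coeff m

theorem adjCoeff_zero (M : Matrix (Fin n) (Fin n) R) : adjCoeff M 0 = 0 := by
  ext
  simp [adjCoeff]

theorem adjCoeff_eq_zero_of_lt (M : Matrix (Fin n) (Fin n) R) {m : ℕ} (hm : n < m) :
    adjCoeff M m = 0 := by
  obtain ⟨m, rfl⟩ := Nat.exists_eq_add_one_of_ne_zero (Nat.ne_zero_of_lt hm)
  ext i j
  have hdeg := natDegree_adjCol_charMatrixCol_lt M i j
  simpa [adjCoeff] using coeff_eq_zero_of_natDegree_lt (by omega)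

theorem trace_adjCoeff (M : Matrix (Fin n) (Fin n) R) (m : ℕ) :
    (adjCoeff M m).trace = m • (charpolyCol M).coeff m := by
  cases m with
  | zero => simp [adjCoeff_zero]
  | succ m =>
    calc (adjCoeff M (m + 1)).trace
        = (derivative (charpolyCol M)).coeff m := by
          simp [derivative_charpolyCol, trace, adjCoeff]
      _ = (m + 1) • (charpolyCol M).coeff (m + 1) := by
          rw [coeff_derivative, nsmul_eq_mul', Nat.cast_succ]

variable {M : Matrix (Fin n) (Fin n) R}

theorem adjCoeff_sub_adjCoeff_succ_mul (hM : M.IsManin) (m : ℕ) :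
    adjCoeff M m - adjCoeff M (m + 1) * M =
      (charpolyCol M).coeff m • (1 : Matrix (Fin n) (Fin n) R) := by
  ext i j
  calc (adjCoeff M m - adjCoeff M (m + 1) * M) i j
      = ((adjCol (charMatrixCol M) * charMatrixCol M) i j).coeff m := by
        rw [coeff_mul_charMatrixCol_apply]
        simp [adjCoeff, mul_apply]
    _ = ((charpolyCol M • (1 : Matrix (Fin n) (Fin n) R[X])) i j).coeff m := by
        rw [adjCol_mul (isManin_charMatrixCol hM), charpolyCol]
    _ = ((charpolyCol M).coeff m • (1 : Matrix (Fin n) (Fin n) R)) i j := by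
        by_cases hij : i = j <;> simp [hij]

theorem sum_range_coeff_smul_pow (hM : M.IsManin) (m r : ℕ) :
    ∑ i ∈ Finset.range r, (charpolyCol M).coeff (m + i) • M ^ i =
      adjCoeff M m - adjCoeff M (m + r) * M ^ r := by
  have hstep (i : ℕ) : (charpolyCol M).coeff (m + i) • M ^ i =
      adjCoeff M (m + i) * M ^ i - adjCoeff M (m + (i + 1)) * M ^ (i + 1) := by
    rw [pow_succ', ← mul_assoc, ← sub_mul, ← add_assoc, adjCoeff_sub_adjCoeff_succ_mul hM,
      smul_one_mul]
  simp only [hstep, Finset.sum_range_sub' fun i => adjCoeff M (m + i) * M ^ i, add_zero, pow_zero,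
    mul_one]

theorem sum_range_coeff_smul_pow_of_lt (hM : M.IsManin) {m r : ℕ} (hr : n < m + r) :
    ∑ i ∈ Finset.range r, (charpolyCol M).coeff (m + i) • M ^ i = adjCoeff M m := by
  rw [sum_range_coeff_smul_pow hM, adjCoeff_eq_zero_of_lt M hr, zero_mul, sub_zero]

theorem cayley_hamilton (hM : M.IsManin) :
    ∑ i ∈ Finset.range (n + 1), (charpolyCol M).coeff i • M ^ i = 0 := by
  simpa [adjCoeff_zero] using sum_range_coeff_smul_pow_of_lt hM (m := 0) (r := n + 1) (by omega)

theorem sum_coeff_mul_trace_pow (hM : M.IsManin) {m r : ℕ} (hr : n < m + r) :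
    ∑ i ∈ Finset.range r, (charpolyCol M).coeff (m + i) * (M ^ i).trace =
      m • (charpolyCol M).coeff m := by
  rw [← trace_adjCoeff, ← sum_range_coeff_smul_pow_of_lt hM hr]
  simp only [trace_sum, trace_smul, smul_eq_mul]

theorem sum_coeff_mul_trace_pow_add (hM : M.IsManin) (p : ℕ) :
    ∑ i ∈ Finset.range (n + 1), (charpolyCol M).coeff i * (M ^ (p + i)).trace = 0 := by
  have h := congrArg (fun A => (A * M ^ p).trace) (cayley_hamilton hM)
  simpa only [Finset.sum_mul, smul_mul_assoc, ← pow_add, add_comm _ p, trace_sum, trace_smul,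
    smul_eq_mul, zero_mul, trace_zero] using h

end CharPoly

end ManinMatrix

/-- Newton identities for Manin matrices: with
`detCol (t • 1 - M) = ∑ k, h k * t^k` (and `h k = 0` outside `0 ≤ k ≤ n`), for every
integer `k ≤ n` one has `k • h k = ∑_{i = max(0,-k)}^{n-k} h (k + i) * Tr (M^i)`. -/
theorem newton_identities_manin {R : Type*} [Ring R] {n : ℕ}
    (M : Matrix (Fin n) (Fin n) R) (hM : M.IsManin) (h : ℤ → R)
    (hdef : ∀ j : ℤ, h j = if j < 0 then 0 else
      ((Matrix.diagonal (fun _ : Fin n => (Polynomial.X : Polynomial R)) -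
        M.map (fun a => Polynomial.C a)).detCol).coeff j.toNat) :
    ∀ k : ℤ, k ≤ (n : ℤ) →
      k • h k = ∑ i ∈ Finset.Icc (max 0 (-k)) ((n : ℤ) - k),
        h (k + i) * Matrix.trace (M ^ i.toNat) := by
  intro k _
  have hcoeff (m : ℕ) : h m = (ManinMatrix.charpolyCol M).coeff m := by
    rw [hdef, if_neg (Int.natCast_nonneg m).not_gt, Int.toNat_natCast]
    rfl
  rw [ManinMatrix.sum_int_Icc_eq_sum_range]
  rcases lt_or_ge k 0 with hneg | hnonneg
  · obtain ⟨p, rfl⟩ : ∃ p : ℕ, k = -p := ⟨k.natAbs, by omega⟩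
    have hlen : ((n : ℤ) - -(p : ℤ) + 1 - max 0 (- -(p : ℤ))).toNat = n + 1 := by omega
    have hzero : h (-p) = 0 := by rw [hdef, if_pos hneg]
    rw [hlen, hzero, smul_zero, ← ManinMatrix.sum_coeff_mul_trace_pow_add hM p]
    refine Finset.sum_congr rfl fun i _ => ?_
    rw [← hcoeff]
    congr 3 <;> omega
  · lift k to ℕ using hnonneg
    have hlen : ((n : ℤ) - k + 1 - max 0 (-(k : ℤ))).toNat = n + 1 - k := by omega
    rw [hlen, hcoeff, natCast_zsmul,
      ← ManinMatrix.sum_coeff_mul_trace_pow hM (by omega : n < k + (n + 1 - k))]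
    refine Finset.sum_congr rfl fun i _ => ?_
    rw [← hcoeff]
    congr 3 <;> omega
end
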